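/- arXiv:0710.0586 — 2 statements merged into one kernel-verified Lean document; each statement's English description precedes it below -/
import Mathlib

section
/- Let A be a C*-algebra and 𝓑 an algebra with involution containing A as a subalgebra which is a left essential ideal of 𝓑. Then for every b ∈ 𝓑 the quantity |b| := sup{‖b·a‖_A : a ∈ A, ‖a‖_A ≤ 1} is finite, the map b ↦ |b| is a submultiplicative norm on 𝓑 (in particular |b| = 0 implies b = 0), its restriction to A coincides with the C*-norm of A, and A is a left strictly essential ideal of (𝓑, |·|), i.e. |b| = sup{|b·a| : a ∈ A, |a| ≤ 1} for all b ∈ 𝓑. -/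
/-- The norm on `𝓑` induced by a left essential embedding `ι : A → 𝓑` of a C*-algebra `A`:
`|b| = sup{‖b·a‖_A : a ∈ A, ‖a‖_A ≤ 1}`, where `b·a = ι c` with `c ∈ A` and
`‖b·a‖_A := ‖c‖`. -/
noncomputable def inducedNorm {A 𝓑 : Type*} [NonUnitalCStarAlgebra A]
    [NonUnitalRing 𝓑] [Module ℂ 𝓑] [IsScalarTower ℂ 𝓑 𝓑] [SMulCommClass ℂ 𝓑 𝓑]
    (ι : A →ₙₐ[ℂ] 𝓑) (b : 𝓑) : ℝ :=
  sSup {r : ℝ | ∃ a c : A, ‖a‖ ≤ 1 ∧ ι c = b * ι a ∧ r = ‖c‖}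

/-!
Multiplication by `b ∈ 𝓑` is a linear map `L : A → A`, and `|b|` is its operator norm, so everything
reduces to the boundedness of `L`. Because `A` is self-adjoint, it is also a right ideal, so `L` is
half of a double centralizer: `w * L x = R w * x`, where `R w = w * b`. If `u n → x` and
`L (u n) → y`, then `w * y = lim R w * u n = R w * x = w * L x` for all `w ∈ A`, hence `y = L x`,
and the closed graph theorem applies.
-/

open Filter Topology

section LeftIdealAction

variable {R A B : Type*} [CommSemiring R] [NonUnitalSemiring A] [Module R A]
  [NonUnitalSemiring B] [Module R B] [IsScalarTower R B B] [SMulCommClass R B B]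
  (ι : A →ₙₐ[R] B) (hinj : Function.Injective ι)
  (hleft : ∀ (b : B) (a : A), b * ι a ∈ Set.range ι)

/-- The action of an algebra `B` by left multiplication on a left ideal, where the ideal is given as
the range of an injective homomorphism `ι : A → B` and the action is transported to `A`. -/
noncomputable def leftIdealAction : B →ₙₐ[R] Module.End R A where
  toFun b :=
    { toFun := fun a => Set.rangeSplitting ι ⟨b * ι a, hleft b a⟩
      map_add' := fun x y => hinj (by simp only [map_add, Set.apply_rangeSplitting, mul_add])
      map_smul' := fun r x => hinj (by
        simp only [map_smul, Set.apply_rangeSplitting, mul_smul_comm, RingHom.id_apply]) }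
  map_smul' r b := LinearMap.ext fun a => hinj (by simp [Set.apply_rangeSplitting, smul_mul_assoc])
  map_zero' := LinearMap.ext fun a => hinj (by simp [Set.apply_rangeSplitting])
  map_add' b c := LinearMap.ext fun a => hinj (by simp [Set.apply_rangeSplitting, add_mul])
  map_mul' b c := LinearMap.ext fun a => hinj (by simp [Set.apply_rangeSplitting, mul_assoc])

theorem map_leftIdealAction (b : B) (a : A) :
    ι (leftIdealAction ι hinj hleft b a) = b * ι a :=
  Set.apply_rangeSplitting ι ⟨b * ι a, hleft b a⟩

end LeftIdealAction

theorem map_mul_mem_range_of_star {A B F : Type*} [Star A] [Mul B] [StarMul B]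
    [FunLike F A B] (ι : F) (hstar : ∀ a : A, ι (star a) = star (ι a))
    (hleft : ∀ (b : B) (a : A), b * ι a ∈ Set.range ι) (a : A) (b : B) :
    ι a * b ∈ Set.range ι := by
  obtain ⟨c, hc⟩ := hleft (star b) (star a)
  exact ⟨star c, by rw [hstar, hc, hstar, star_mul, star_star, star_star]⟩

section Boundedness

theorem continuous_of_mul_apply_eq {𝕜 A : Type*} [NontriviallyNormedField 𝕜]
    [NonUnitalNormedRing A] [NormedSpace 𝕜 A] [CompleteSpace A]
    (hfaithful : ∀ y z : A, (∀ w, w * y = w * z) → y = z)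
    (L : A →ₗ[𝕜] A) (R : A → A) (hLR : ∀ x y, x * L y = R x * y) : Continuous L := by
  refine L.continuous_of_seq_closed_graph fun u x y hu hLu => hfaithful y (L x) fun w => ?_
  have tendsto_mul_y : Tendsto (fun n => w * L (u n)) atTop (𝓝 (w * y)) := hLu.const_mul w
  have tendsto_mul_Lx : Tendsto (fun n => w * L (u n)) atTop (𝓝 (w * L x)) := by
    simpa only [hLR] using hu.const_mul (R w)
  exact tendsto_nhds_unique tendsto_mul_y tendsto_mul_Lx

theorem eq_of_forall_mul_left_eq {A : Type*} [NonUnitalNormedRing A] [StarRing A] [CStarRing A]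
    {y z : A} (h : ∀ w, w * y = w * z) : y = z := by
  rw [← sub_eq_zero, ← CStarRing.star_mul_self_eq_zero_iff, mul_sub, h, sub_self]

variable {𝕜 A B : Type*} [NontriviallyNormedField 𝕜] [NonUnitalNormedRing A] [NormedSpace 𝕜 A]
  [CompleteSpace A] [StarRing A] [CStarRing A]
  [NonUnitalSemiring B] [Module 𝕜 B] [IsScalarTower 𝕜 B B] [SMulCommClass 𝕜 B B]
  (ι : A →ₙₐ[𝕜] B) (hinj : Function.Injective ι)
  (hleft : ∀ (b : B) (a : A), b * ι a ∈ Set.range ι)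

theorem continuous_leftIdealAction (hright : ∀ (a : A) (b : B), ι a * b ∈ Set.range ι) (b : B) :
    Continuous (leftIdealAction ι hinj hleft b) := by
  choose R hR using fun a => hright a b
  refine continuous_of_mul_apply_eq (fun _ _ => eq_of_forall_mul_left_eq) _ R fun x y => hinj ?_
  rw [map_mul, map_mul, map_leftIdealAction, hR, mul_assoc]

variable (hright : ∀ (a : A) (b : B), ι a * b ∈ Set.range ι)

/-- The action of `B` by left multiplication on a two-sided ideal `A` carrying a complete C*-norm,
as a homomorphism into the algebra of bounded operators on `A`; as in `leftIdealAction`, the ideal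
is presented by its embedding `ι`. -/
noncomputable def idealActionCLM : B →ₙₐ[𝕜] (A →L[𝕜] A) where
  toFun b := ⟨leftIdealAction ι hinj hleft b, continuous_leftIdealAction ι hinj hleft hright b⟩
  map_smul' z b := ContinuousLinearMap.coe_injective (map_smul (leftIdealAction ι hinj hleft) z b)
  map_zero' := ContinuousLinearMap.coe_injective (map_zero (leftIdealAction ι hinj hleft))
  map_add' b c := ContinuousLinearMap.coe_injective (map_add (leftIdealAction ι hinj hleft) b c)
  map_mul' b c := ContinuousLinearMap.coe_injective (map_mul (leftIdealAction ι hinj hleft) b c)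

theorem map_idealActionCLM (b : B) (a : A) :
    ι (idealActionCLM ι hinj hleft hright b a) = b * ι a :=
  map_leftIdealAction ι hinj hleft b a

theorem idealActionCLM_eq_zero_iff (hess : ∀ b : B, (∀ a : A, b * ι a = 0) → b = 0) {b : B} :
    idealActionCLM ι hinj hleft hright b = 0 ↔ b = 0 := by
  refine ⟨fun h => hess b fun a => ?_, fun h => h ▸ map_zero _⟩
  rw [← map_idealActionCLM ι hinj hleft hright, h, zero_apply, map_zero]

end Boundedness

section NormOfMultiplication

variable {A B : Type*} [SeminormedAddCommGroup A] [Mul B] {ι : A → B} {b : B}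

theorem setOf_norm_mul_eq_image_closedBall (hinj : Function.Injective ι) {T : A → A}
    (hT : ∀ a, ι (T a) = b * ι a) :
    {r : ℝ | ∃ a c : A, ‖a‖ ≤ 1 ∧ ι c = b * ι a ∧ r = ‖c‖} =
      (fun a => ‖T a‖) '' Metric.closedBall 0 1 := by
  ext r
  simp only [← hT, hinj.eq_iff, Set.mem_ofPred_eq, Set.mem_image, mem_closedBall_zero_iff,
    exists_eq_left, exists_and_left, eq_comm (a := r)]

theorem bddAbove_setOf_norm_mul {𝕜 : Type*} [NontriviallyNormedField 𝕜] [NormedSpace 𝕜 A]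
    (hinj : Function.Injective ι) {T : A →L[𝕜] A} (hT : ∀ a, ι (T a) = b * ι a) :
    BddAbove {r : ℝ | ∃ a c : A, ‖a‖ ≤ 1 ∧ ι c = b * ι a ∧ r = ‖c‖} := by
  rw [setOf_norm_mul_eq_image_closedBall hinj hT]
  exact ⟨‖T‖, Set.forall_mem_image.mpr fun a ha =>
    T.unit_le_opNorm a (mem_closedBall_zero_iff.mp ha)⟩

end NormOfMultiplication

section InducedNorm

variable {A 𝓑 : Type*} [NonUnitalCStarAlgebra A] [NonUnitalRing 𝓑] [Module ℂ 𝓑]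
  [IsScalarTower ℂ 𝓑 𝓑] [SMulCommClass ℂ 𝓑 𝓑] (ι : A →ₙₐ[ℂ] 𝓑)

theorem inducedNorm_eq_opNorm (hinj : Function.Injective ι) {b : 𝓑} {T : A →L[ℂ] A}
    (hT : ∀ a, ι (T a) = b * ι a) : inducedNorm ι b = ‖T‖ := by
  rw [inducedNorm, setOf_norm_mul_eq_image_closedBall hinj hT, T.sSup_unitClosedBall_eq_norm]

theorem inducedNorm_map (hinj : Function.Injective ι) (a : A) :
    inducedNorm ι (ι a) = ‖a‖ := by
  rw [inducedNorm_eq_opNorm ι hinj (T := ContinuousLinearMap.mul ℂ A a) (map_mul ι a),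
    ContinuousLinearMap.opNorm_mul_apply]

theorem inducedNorm_eq_sSup_inducedNorm_mul (hinj : Function.Injective ι)
    (hleft : ∀ (b : 𝓑) (a : A), b * ι a ∈ Set.range ι) (b : 𝓑) :
    inducedNorm ι b = sSup {r : ℝ | ∃ a : A, ‖a‖ ≤ 1 ∧ r = inducedNorm ι (b * ι a)} := by
  choose T hT using hleft b
  rw [inducedNorm, setOf_norm_mul_eq_image_closedBall hinj hT]
  simp only [← hT, inducedNorm_map ι hinj, Set.image, mem_closedBall_zero_iff, eq_comm]

end InducedNorm

theorem stmt11_general {A 𝓑 : Type*} [NonUnitalCStarAlgebra A] [NonUnitalRing 𝓑] [Module ℂ 𝓑]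
    [IsScalarTower ℂ 𝓑 𝓑] [SMulCommClass ℂ 𝓑 𝓑]
    (ι : A →ₙₐ[ℂ] 𝓑) (hinj : Function.Injective ι)
    (hleft : ∀ (b : 𝓑) (a : A), b * ι a ∈ Set.range ι)
    (hright : ∀ (a : A) (b : 𝓑), ι a * b ∈ Set.range ι)
    (hess : ∀ b : 𝓑, (∀ a : A, b * ι a = 0) → b = 0) :
    (∀ b : 𝓑, BddAbove {r : ℝ | ∃ a c : A, ‖a‖ ≤ 1 ∧ ι c = b * ι a ∧ r = ‖c‖}) ∧
    (∀ b : 𝓑, 0 ≤ inducedNorm ι b) ∧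
    (∀ b : 𝓑, inducedNorm ι b = 0 ↔ b = 0) ∧
    (∀ b c : 𝓑, inducedNorm ι (b + c) ≤ inducedNorm ι b + inducedNorm ι c) ∧
    (∀ (z : ℂ) (b : 𝓑), inducedNorm ι (z • b) = ‖z‖ * inducedNorm ι b) ∧
    (∀ b c : 𝓑, inducedNorm ι (b * c) ≤ inducedNorm ι b * inducedNorm ι c) ∧
    (∀ a : A, inducedNorm ι (ι a) = ‖a‖) ∧
    (∀ b : 𝓑, inducedNorm ι b =
      sSup {r : ℝ | ∃ a : A, ‖a‖ ≤ 1 ∧ r = inducedNorm ι (b * ι a)}) := by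
  let φ := idealActionCLM ι hinj hleft hright
  have hφ (b : 𝓑) (a : A) : ι (φ b a) = b * ι a := map_idealActionCLM ι hinj hleft hright b a
  have norm_eq (b : 𝓑) : inducedNorm ι b = ‖φ b‖ := inducedNorm_eq_opNorm ι hinj (hφ b)
  refine ⟨fun b => bddAbove_setOf_norm_mul hinj (hφ b), fun b => ?_, fun b => ?_,
    fun b c => ?_, fun z b => ?_, fun b c => ?_, inducedNorm_map ι hinj,
    inducedNorm_eq_sSup_inducedNorm_mul ι hinj hleft⟩
  · exact norm_eq b ▸ norm_nonneg (φ b)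
  · rw [norm_eq, norm_eq_zero, idealActionCLM_eq_zero_iff ι hinj hleft hright hess]
  · simpa only [norm_eq, map_add] using norm_add_le (φ b) (φ c)
  · simp only [norm_eq, map_smul, norm_smul]
  · simpa only [norm_eq, map_mul] using norm_mul_le (φ b) (φ c)

/-- Let `A` be a C*-algebra and `𝓑` an algebra with involution containing
`A` as a subalgebra which is a left essential ideal of `𝓑`.  Then for every `b ∈ 𝓑` the
quantity `|b| = sup{‖b·a‖_A : a ∈ A, ‖a‖_A ≤ 1}` is finite, `|·|` is a submultiplicative
norm on `𝓑`, its restriction to `A` is the C*-norm of `A`, and `A` is a left strictly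
essential ideal of `(𝓑, |·|)`. -/
theorem stmt11 {A 𝓑 : Type*} [NonUnitalCStarAlgebra A]
    [NonUnitalRing 𝓑] [Module ℂ 𝓑] [IsScalarTower ℂ 𝓑 𝓑] [SMulCommClass ℂ 𝓑 𝓑]
    [StarRing 𝓑]
    (ι : A →ₙₐ[ℂ] 𝓑) (hinj : Function.Injective ι)
    (hstar : ∀ a : A, ι (star a) = star (ι a))
    (hideal : ∀ (b : 𝓑) (a : A), b * ι a ∈ Set.range ι)
    (hess : ∀ b : 𝓑, (∀ a : A, b * ι a = 0) → b = 0) :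
    -- finiteness of the supremum
    (∀ b : 𝓑, BddAbove {r : ℝ | ∃ a c : A, ‖a‖ ≤ 1 ∧ ι c = b * ι a ∧ r = ‖c‖}) ∧
    -- `|·|` is a norm
    (∀ b : 𝓑, 0 ≤ inducedNorm ι b) ∧
    (∀ b : 𝓑, inducedNorm ι b = 0 ↔ b = 0) ∧
    (∀ b c : 𝓑, inducedNorm ι (b + c) ≤ inducedNorm ι b + inducedNorm ι c) ∧
    (∀ (z : ℂ) (b : 𝓑), inducedNorm ι (z • b) = ‖z‖ * inducedNorm ι b) ∧
    -- submultiplicativity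
    (∀ b c : 𝓑, inducedNorm ι (b * c) ≤ inducedNorm ι b * inducedNorm ι c) ∧
    -- restriction to `A` is the C*-norm
    (∀ a : A, inducedNorm ι (ι a) = ‖a‖) ∧
    -- `A` is a left strictly essential ideal of `(𝓑, |·|)`
    (∀ b : 𝓑, inducedNorm ι b =
      sSup {r : ℝ | ∃ a : A, ‖a‖ ≤ 1 ∧ r = inducedNorm ι (b * ι a)}) := by
  exact stmt11_general ι hinj hideal (map_mul_mem_range_of_star ι hstar hideal) hess
end

section
/- Let A be a C*-algebra, H a complex Hilbert space, and π : A → B(H) an injective *-homomorphism which is nondegenerate, i.e. the closed linear span of {π(a)ξ : a ∈ A, ξ ∈ H} is H. Then LM_π(A) := {T ∈ B(H) : T·π(a) ∈ π(A) for all a ∈ A} equals the closure of π(A) in B(H) with respect to the left strict topology, i.e. the locally convex topology on B(H) generated by the seminorms T ↦ ‖T·π(a)‖ (operator norm), a ∈ A. -/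
/-!
Left multipliers are closed in the left strict topology because that topology makes each
`T ↦ T * π a` norm-continuous and `π(A)` is norm-closed, `π` being isometric. Conversely, if `T` is
a left multiplier and `e` runs along an approximate unit of `A`, then `T * π e` lies in `π(A)`, and
it converges left strictly to `T` since `T * π e * π a = T * π (e * a) → T * π a`.
-/

open Filter Topology

section LeftStrict

variable {A M : Type*}

/-- The left strict topology on `M` determined by a family `φ`: the coarsest topology making all
right multiplications `T ↦ T * φ a` continuous into the given topology of `M`. It takes a family
rather than a subset so that an algebra can be passed through its representation. -/
@[reducible]
def leftStrictTopology [Mul M] [t : TopologicalSpace M] (φ : A → M) : TopologicalSpace M :=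
  ⨅ a : A, t.induced (fun T : M => T * φ a)

/-- The left multipliers of the range of `φ` in `M`, written `LM_φ(A)` when `φ` is a representation
of an algebra `A`. -/
def leftMultipliers [Mul M] (φ : A → M) : Set M :=
  {T : M | ∀ a : A, T * φ a ∈ Set.range φ}

theorem tendsto_leftStrictTopology_iff [Mul M] [TopologicalSpace M] {φ : A → M} {ι : Type*}
    {l : Filter ι} {u : ι → M} {T : M} :
    Tendsto u l (@nhds M (leftStrictTopology φ) T) ↔
      ∀ a : A, Tendsto (fun i => u i * φ a) l (𝓝 (T * φ a)) := by
  simp only [nhds_iInf, nhds_induced, tendsto_iInf, tendsto_comap_iff, Function.comp_def]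

theorem continuous_mul_right_leftStrictTopology [Mul M] [t : TopologicalSpace M] (φ : A → M)
    (a : A) : Continuous[leftStrictTopology φ, t] fun T : M => T * φ a :=
  continuous_iInf_dom (i := a) continuous_induced_dom

theorem isClosed_leftMultipliers [Mul M] [TopologicalSpace M] {φ : A → M}
    (hφ : IsClosed (Set.range φ)) : IsClosed[leftStrictTopology φ] (leftMultipliers φ) := by
  have hinter : leftMultipliers φ = ⋂ a : A, (fun T : M => T * φ a) ⁻¹' Set.range φ :=
    Set.ofPred_forall _
  rw [hinter]
  exact @isClosed_iInter _ _ (leftStrictTopology φ) _ fun a =>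
    @IsClosed.preimage _ _ (leftStrictTopology φ) _ _
      (continuous_mul_right_leftStrictTopology φ a) _ hφ

theorem range_subset_leftMultipliers [Mul A] [Mul M] {F : Type*} [FunLike F A M]
    [MulHomClass F A M] (φ : F) : Set.range φ ⊆ leftMultipliers φ := by
  rintro _ ⟨b, rfl⟩ a
  exact ⟨b * a, map_mul φ b a⟩

theorem tendsto_mul_map_leftStrictTopology [Mul A] [TopologicalSpace A] [Semigroup M]
    [TopologicalSpace M] [SeparatelyContinuousMul M] {F : Type*} [FunLike F A M] [MulHomClass F A M]
    {φ : F} (hφ : Continuous φ) {l : Filter A} (hl : ∀ a : A, Tendsto (· * a) l (𝓝 a)) (T : M) :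
    Tendsto (fun e => T * φ e) l (@nhds M (leftStrictTopology φ) T) := by
  refine tendsto_leftStrictTopology_iff.mpr fun a => ?_
  have hlim : Tendsto (fun e => T * φ (e * a)) l (𝓝 (T * φ a)) :=
    ((hφ.tendsto a).comp (hl a)).const_mul T
  simpa only [map_mul, mul_assoc] using hlim

theorem closure_range_leftStrictTopology [Mul A] [TopologicalSpace A] [Semigroup M]
    [TopologicalSpace M] [SeparatelyContinuousMul M] {F : Type*} [FunLike F A M] [MulHomClass F A M]
    {φ : F} (hφ : Continuous φ) (hclosed : IsClosed (Set.range φ)) {l : Filter A} [l.NeBot]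
    (hl : ∀ a : A, Tendsto (· * a) l (𝓝 a)) :
    closure[leftStrictTopology φ] (Set.range φ) = leftMultipliers φ := by
  apply Set.Subset.antisymm
  · exact @closure_minimal _ (leftStrictTopology φ) _ _ (range_subset_leftMultipliers φ)
      (isClosed_leftMultipliers hclosed)
  · intro T hT
    exact @mem_closure_of_tendsto _ (leftStrictTopology φ) _ _ _ _ _ _
      (tendsto_mul_map_leftStrictTopology hφ hl T) (.of_forall hT)

end LeftStrict

theorem exists_isApproximateUnit (A : Type*) [NonUnitalCStarAlgebra A] :
    ∃ l : Filter A, l.IsApproximateUnit := by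
  let := CStarAlgebra.spectralOrder A
  have := CStarAlgebra.spectralOrderedRing A
  exact ⟨_, (CStarAlgebra.increasingApproximateUnit A).toIsApproximateUnit⟩

theorem stmt15_general {A B : Type*} [NonUnitalCStarAlgebra A] [NonUnitalCStarAlgebra B]
    (π : A →⋆ₙₐ[ℂ] B) (hinj : Function.Injective π) :
    closure[leftStrictTopology π] (Set.range π) = leftMultipliers π := by
  have hiso : Isometry π := NonUnitalStarAlgHom.isometry π hinj
  obtain ⟨l, hl⟩ := exists_isApproximateUnit A
  have := hl.neBot
  exact closure_range_leftStrictTopology hiso.continuous hiso.isClosedEmbedding.isClosed_range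
    hl.tendsto_mul_right

/-- Let `A` be a C*-algebra, `H` a complex Hilbert space and
`π : A → B(H)` an injective nondegenerate *-homomorphism.  Then
`LM_π(A) = {T ∈ B(H) : T·π(a) ∈ π(A) for all a ∈ A}` equals the closure of `π(A)` in
`B(H)` with respect to the left strict topology, i.e. the topology generated by the
seminorms `T ↦ ‖T·π(a)‖`, `a ∈ A` (the coarsest topology making every map `T ↦ T·π(a)`
into `B(H)` continuous). -/
theorem stmt15 {A H : Type*} [NonUnitalCStarAlgebra A]
    [NormedAddCommGroup H] [InnerProductSpace ℂ H] [CompleteSpace H]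
    (π : A →⋆ₙₐ[ℂ] (H →L[ℂ] H)) (hinj : Function.Injective π)
    (hnondeg : Dense
      (Submodule.span ℂ {ξ : H | ∃ (a : A) (η : H), π a η = ξ} : Set H)) :
    letI leftStrictTopology : TopologicalSpace (H →L[ℂ] H) :=
      ⨅ a : A, TopologicalSpace.induced
        (fun T : H →L[ℂ] H => T.comp (π a)) inferInstance
    @closure _ leftStrictTopology (Set.range π) =
      {T : H →L[ℂ] H | ∀ a : A, T.comp (π a) ∈ Set.range π} :=
  stmt15_general π hinj
end
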